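/- Let I be a submodule of K[x₁,…,xₙ]^d generated by finitely many homogeneous elements, where K is a field with valuation. Then the graded quotients K[x₁,…,xₙ]^d / I and K[x₁,…,xₙ]^d / in_{w,≺}(I) have the same Hilbert function: for every degree δ ∈ ℕ, the K-dimension of the degree-δ graded component of K[x₁,…,xₙ]^d / I equals the K-dimension of the degree-δ graded component of K[x₁,…,xₙ]^d / in_{w,≺}(I). -/

import Mathlib

open MvPolynomial

/-- A (real-valued, additive) valuation on a field `K`:
`v(ab) = v(a)+v(b)` for nonzero `a,b`, `v(a+b) ≥ min(v a, v b)`, and `v a = ∞ ↔ a = 0`. -/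
structure ValOn (K : Type*) [Field K] where
  v : K → WithTop ℝ
  v_mul : ∀ a b : K, a ≠ 0 → b ≠ 0 → v (a * b) = v a + v b
  v_add_min : ∀ a b : K, min (v a) (v b) ≤ v (a + b)
  v_eq_top_iff : ∀ a : K, v a = ⊤ ↔ a = 0

/-- A module monomial `x^u·e_k` of `R[x₁,…,xₙ]^d`, recorded as the pair `(u, k)`. -/
abbrev MMon (n d : ℕ) := (Fin n →₀ ℕ) × Fin d

/-- A term `c·x^u·e_k`, recorded as `(c, (u, k))`. -/
abbrev Term (R : Type*) (n d : ℕ) := R × MMon n d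

/-- The strict order on module monomials induced by the monomial order `mo`:
`x^α·e_i ≺ x^β·e_j` iff `x^α ≺ x^β`, or `x^α = x^β` and `i < j`. -/
def mmLt {n d : ℕ} (mo : MonomialOrder (Fin n)) (a b : MMon n d) : Prop :=
  mo.toSyn a.1 < mo.toSyn b.1 ∨ (a.1 = b.1 ∧ a.2 < b.2)

/-- The dot product `w·u` of a weight vector with an exponent vector. -/
def wdot {n : ℕ} (w : Fin n → ℝ) (u : Fin n →₀ ℕ) : ℝ := ∑ i, w i * (u i : ℝ)

/-- The weight `ν(c) + w·u` of a term `c·x^u·e_k`. -/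
def twt {R : Type*} {n d : ℕ} (ν : R → WithTop ℝ) (w : Fin n → ℝ) (t : Term R n d) :
    WithTop ℝ :=
  ν t.1 + (wdot w t.2.1 : ℝ)

/-- The term (pre)order: `c·x^u·e_i ≤ c'·x^{u'}·e_j` iff `ν(c) + w·u < ν(c') + w·u'`, or
they are equal and `x^u·e_i ⪰ x^{u'}·e_j` (smaller terms are "more initial"). -/
def termLE {R : Type*} {n d : ℕ} (ν : R → WithTop ℝ) (w : Fin n → ℝ)
    (mo : MonomialOrder (Fin n)) (t t' : Term R n d) : Prop :=
  twt ν w t < twt ν w t' ∨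
    (twt ν w t = twt ν w t' ∧ (mmLt mo t'.2 t.2 ∨ t.2 = t'.2))

/-- The coefficient of `f ∈ R[x₁,…,xₙ]^d` at the module monomial `m = (u, k)`. -/
def coeffM {R : Type*} [CommSemiring R] {n d : ℕ} (f : Fin d → MvPolynomial (Fin n) R)
    (m : MMon n d) : R :=
  coeff m.1 (f m.2)

/-- `t` is the initial term `in_{w,≺}(f)` of `f`: it is a term of `f` which is least
in the term order among all terms of `f`. -/
def IsInit {R : Type*} [CommSemiring R] {n d : ℕ} (ν : R → WithTop ℝ) (w : Fin n → ℝ)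
    (mo : MonomialOrder (Fin n)) (f : Fin d → MvPolynomial (Fin n) R) (t : Term R n d) : Prop :=
  t.1 ≠ 0 ∧ coeffM f t.2 = t.1 ∧
    ∀ m : MMon n d, coeffM f m ≠ 0 → termLE ν w mo t (coeffM f m, m)

/-- The term `c·x^u·e_k` as an element of `R[x₁,…,xₙ]^d`. -/
noncomputable def termEl {R : Type*} [CommSemiring R] {n d : ℕ} (t : Term R n d) :
    Fin d → MvPolynomial (Fin n) R :=
  Pi.single t.2.2 (monomial t.2.1 t.1)

/-- The initial submodule `in_{w,≺}(I)`: the submodule generated by the initial terms of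
the nonzero elements of `I`. -/
noncomputable def inSub {R : Type*} [CommRing R] {n d : ℕ} (ν : R → WithTop ℝ)
    (w : Fin n → ℝ) (mo : MonomialOrder (Fin n))
    (I : Submodule (MvPolynomial (Fin n) R) (Fin d → MvPolynomial (Fin n) R)) :
    Submodule (MvPolynomial (Fin n) R) (Fin d → MvPolynomial (Fin n) R) :=
  Submodule.span _ {g | ∃ f ∈ I, f ≠ 0 ∧ ∃ t : Term R n d, IsInit ν w mo f t ∧ g = termEl t}

/-- `f ∈ R[x₁,…,xₙ]^d` is homogeneous (of some degree `δ`). -/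
def IsHomog {R : Type*} [CommSemiring R] {n d : ℕ} (f : Fin d → MvPolynomial (Fin n) R) : Prop :=
  ∃ δ : ℕ, ∀ m : MMon n d, coeffM f m ≠ 0 → (∑ i, m.1 i) = δ

/-- The `K`-subspace of `K[x₁,…,xₙ]^d` of homogeneous elements of degree `δ`
(together with `0`). -/
noncomputable def homogComponent (K : Type*) [Field K] (n d : ℕ) (δ : ℕ) :
    Submodule K (Fin d → MvPolynomial (Fin n) K) where
  carrier := {f | ∀ m : MMon n d, coeffM f m ≠ 0 → (∑ i, m.1 i) = δ}
  zero_mem' := by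
    intro m hm
    simp [coeffM] at hm
  add_mem' := by
    intro f g hf hg m hm
    have e : coeffM (f + g) m = coeffM f m + coeffM g m := by simp [coeffM]
    by_cases h : coeffM f m = 0
    · exact hg m (fun h2 => hm (by rw [e, h, h2, add_zero]))
    · exact hf m h
  smul_mem' := by
    intro c f hf m hm
    have e : coeffM (c • f) m = c * coeffM f m := by simp [coeffM]
    exact hf m (fun h => hm (by rw [e, h, mul_zero]))

/-- The `K`-dimension (as a cardinal) of the degree-`δ` graded component of the quotient
`K[x₁,…,xₙ]^d / N`: homogeneous elements of degree `δ` modulo those lying in `N`. -/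
noncomputable def hilbertFn {K : Type*} [Field K] {n d : ℕ}
    (N : Submodule (MvPolynomial (Fin n) K) (Fin d → MvPolynomial (Fin n) K)) (δ : ℕ) :
    Cardinal :=
  Module.rank K
    (homogComponent K n d δ ⧸
      Submodule.comap (homogComponent K n d δ).subtype (N.restrictScalars K))

section Helpers

variable {K : Type*} [Field K] {n d : ℕ}

lemma ValOn.exists_real (V : ValOn K) {a : K} (ha : a ≠ 0) : ∃ r : ℝ, V.v a = (r : WithTop ℝ) := by
  have h : V.v a ≠ ⊤ := fun h => ha ((V.v_eq_top_iff a).1 h)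
  obtain ⟨r, hr⟩ := WithTop.ne_top_iff_exists.1 h
  exact ⟨r, hr.symm⟩

lemma ValOn.v_neg (V : ValOn K) (a : K) : V.v (-a) = V.v a := by
  by_cases ha : a = 0
  · simp [ha]
  obtain ⟨r, hr⟩ := V.exists_real (one_ne_zero (α := K))
  obtain ⟨s, hs⟩ := V.exists_real (neg_ne_zero.2 (one_ne_zero (α := K)))
  obtain ⟨t, ht⟩ := V.exists_real ha
  have h1 := V.v_mul 1 1 one_ne_zero one_ne_zero
  have h2 := V.v_mul (-1) (-1) (neg_ne_zero.2 one_ne_zero) (neg_ne_zero.2 one_ne_zero)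
  have h3 := V.v_mul (-1) a (neg_ne_zero.2 one_ne_zero) ha
  rw [mul_one, hr, ← WithTop.coe_add, WithTop.coe_inj] at h1
  rw [neg_mul_neg, mul_one, hr, hs, ← WithTop.coe_add, WithTop.coe_inj] at h2
  rw [neg_one_mul, hs, ht, ← WithTop.coe_add] at h3
  rw [h3, ht, WithTop.coe_inj]
  linarith

lemma ValOn.lt_sum (V : ValOn K) {ι : Type*} (s : Finset ι) (x : ι → K) (c : ℝ)
    (h : ∀ i ∈ s, (c : WithTop ℝ) < V.v (x i)) : (c : WithTop ℝ) < V.v (∑ i ∈ s, x i) := by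
  classical
  induction s using Finset.induction_on with
  | empty =>
    rw [Finset.sum_empty, (V.v_eq_top_iff 0).2 rfl]
    exact WithTop.coe_lt_top c
  | insert a s ha ih =>
    rw [Finset.sum_insert ha]
    refine lt_of_lt_of_le (lt_min (h a (Finset.mem_insert_self a s)) (ih ?_)) (V.v_add_min _ _)
    exact fun i hi => h i (Finset.mem_insert_of_mem hi)

lemma mmLt_asymm (mo : MonomialOrder (Fin n)) {a b : MMon n d} (h : mmLt mo a b)
    (h' : mmLt mo b a ∨ a = b) : False := by
  rcases h with h | ⟨h1, h2⟩
  · rcases h' with (h' | ⟨h3, h4⟩) | rfl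
    · exact lt_asymm h h'
    · rw [h3] at h; exact lt_irrefl _ h
    · exact lt_irrefl _ h
  · rcases h' with (h' | ⟨h3, h4⟩) | rfl
    · rw [h1] at h'; exact lt_irrefl _ h'
    · exact lt_asymm h2 h4
    · exact lt_irrefl _ h2

/-- A sort key turning the term preorder into a linear order. -/
noncomputable def tkey (ν : K → WithTop ℝ) (w : Fin n → ℝ) (mo : MonomialOrder (Fin n))
    (t : Term K n d) : Lex (WithTop ℝ × (Lex (mo.syn × Fin d))ᵒᵈ) :=
  toLex (twt ν w t, OrderDual.toDual (toLex (mo.toSyn t.2.1, t.2.2)))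

lemma termLE_of_tkey (ν : K → WithTop ℝ) (w : Fin n → ℝ) (mo : MonomialOrder (Fin n))
    (t t' : Term K n d) (h : tkey ν w mo t ≤ tkey ν w mo t') : termLE ν w mo t t' := by
  rcases Prod.Lex.toLex_le_toLex.1 h with h | ⟨h1, h2⟩
  · exact Or.inl h
  · refine Or.inr ⟨h1, ?_⟩
    have h3 := OrderDual.toDual_le_toDual.1 h2
    rcases Prod.Lex.toLex_le_toLex.1 h3 with h | ⟨h4, h5⟩
    · exact Or.inl (Or.inl h)
    · have h4' : t'.2.1 = t.2.1 := mo.toSyn.injective h4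
      rcases lt_or_eq_of_le h5 with h5 | h5
      · exact Or.inl (Or.inr ⟨h4', h5⟩)
      · exact Or.inr (Prod.ext h4'.symm h5.symm)

lemma strict_of_termLE (V : ValOn K) (w : Fin n → ℝ) (mo : MonomialOrder (Fin n))
    {m m0 : MMon n d} (hne : m ≠ m0) {x0 a b c : K} (hx : x0 ≠ 0) (ha : a ≠ 0) (hb : b ≠ 0)
    (hc : c ≠ 0) (hA : termLE V.v w mo (x0, m0) (c * a, m))
    (hB : termLE V.v w mo (a, m) (b, m0)) : V.v x0 < V.v (c * b) := by
  obtain ⟨x, hx'⟩ := V.exists_real hx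
  obtain ⟨r, hr⟩ := V.exists_real ha
  obtain ⟨s, hs⟩ := V.exists_real hb
  obtain ⟨t, ht⟩ := V.exists_real hc
  simp only [termLE, twt, V.v_mul c a hc ha, V.v_mul c b hc hb, hx', hr, hs, ht,
    ← WithTop.coe_add, WithTop.coe_lt_coe, WithTop.coe_inj] at hA hB ⊢
  rcases hA with hA | ⟨hA, hA'⟩ <;> rcases hB with hB | ⟨hB, hB'⟩
  · linarith
  · linarith
  · linarith
  · exfalso
    rcases hA' with hA' | hA'
    · exact mmLt_asymm mo hA' (hB'.imp id id)
    · exact hne (Eq.symm hA')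

end Helpers

section HelpersTwo

variable {K : Type*} [Field K] {n d : ℕ}

/-- The set of initial monomials of elements of `I`. -/
def initSet (V : ValOn K) (w : Fin n → ℝ) (mo : MonomialOrder (Fin n))
    (I : Submodule (MvPolynomial (Fin n) K) (Fin d → MvPolynomial (Fin n) K)) : Set (MMon n d) :=
  {m | ∃ f ∈ I, coeffM f m ≠ 0 ∧
    ∀ m', coeffM f m' ≠ 0 → termLE V.v w mo (coeffM f m, m) (coeffM f m', m')}

lemma wdot_add (w : Fin n → ℝ) (a b : Fin n →₀ ℕ) : wdot w (a + b) = wdot w a + wdot w b := by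
  simp [wdot, mul_add, Finset.sum_add_distrib]

lemma termLE_shift (V : ValOn K) (w : Fin n → ℝ) (mo : MonomialOrder (Fin n))
    {c c' : K} (hc : c ≠ 0) (hc' : c' ≠ 0) {m m' : MMon n d} (a : Fin n →₀ ℕ)
    (h : termLE V.v w mo (c, m) (c', m')) :
    termLE V.v w mo (c, (m.1 + a, m.2)) (c', (m'.1 + a, m'.2)) := by
  obtain ⟨r, hr⟩ := V.exists_real hc
  obtain ⟨s, hs⟩ := V.exists_real hc'
  simp only [termLE, twt, hr, hs, wdot_add, mmLt, map_add,
    ← WithTop.coe_add, WithTop.coe_lt_coe, WithTop.coe_inj] at h ⊢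
  rcases h with h | ⟨h1, h2⟩
  · left; linarith
  · refine Or.inr ⟨by linarith, ?_⟩
    rcases h2 with (h2 | ⟨h2, h3⟩) | h2
    · exact Or.inl (Or.inl (add_lt_add_left h2 _))
    · exact Or.inl (Or.inr ⟨by rw [h2], h3⟩)
    · right; rw [h2]

lemma initSet_up (V : ValOn K) (w : Fin n → ℝ) (mo : MonomialOrder (Fin n))
    (I : Submodule (MvPolynomial (Fin n) K) (Fin d → MvPolynomial (Fin n) K))
    {m : MMon n d} (hm : m ∈ initSet V w mo I) (a : Fin n →₀ ℕ) :
    ((m.1 + a, m.2) : MMon n d) ∈ initSet V w mo I := by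
  obtain ⟨f, hf, h0, h1⟩ := hm
  have key : ∀ m : MMon n d, coeffM ((monomial a (1 : K)) • f) m =
      if a ≤ m.1 then coeffM f (m.1 - a, m.2) else 0 := by
    intro m
    simp [coeffM, coeff_monomial_mul']
  have key2 : coeffM ((monomial a (1 : K)) • f) (m.1 + a, m.2) = coeffM f m := by
    rw [key]; simp
  refine ⟨(monomial a (1 : K)) • f, I.smul_mem _ hf, by rwa [key2], ?_⟩
  intro m' hm'
  rw [key2]
  rw [key] at hm' ⊢
  split_ifs at hm' ⊢ with hle
  · have := termLE_shift V w mo h0 hm' a (h1 _ hm')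
    simpa [tsub_add_cancel_of_le hle] using this
  · exact absurd rfl hm'

lemma exists_init (V : ValOn K) (w : Fin n → ℝ) (mo : MonomialOrder (Fin n))
    (I : Submodule (MvPolynomial (Fin n) K) (Fin d → MvPolynomial (Fin n) K))
    {f : Fin d → MvPolynomial (Fin n) K} (hf : f ∈ I) (h0 : f ≠ 0) :
    ∃ m ∈ initSet V w mo I, coeffM f m ≠ 0 := by
  classical
  let S : Finset (MMon n d) :=
    Finset.univ.biUnion fun k : Fin d => (f k).support.image fun u => (u, k)
  have hS : ∀ m, m ∈ S ↔ coeffM f m ≠ 0 := by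
    rintro ⟨u, k⟩
    simp [S, coeffM]
  have hne : S.Nonempty := by
    by_contra hS'
    rw [Finset.not_nonempty_iff_eq_empty] at hS'
    apply h0
    funext k
    ext u
    by_contra hu
    have : ((u, k) : MMon n d) ∈ S := (hS _).2 (by simpa [coeffM] using hu)
    simp [hS'] at this
  obtain ⟨m, hm, hmin⟩ := Finset.exists_min_image S (fun m => tkey V.v w mo (coeffM f m, m)) hne
  refine ⟨m, ⟨f, hf, (hS m).1 hm, fun m' hm' => ?_⟩, (hS m).1 hm⟩
  exact termLE_of_tkey _ _ _ _ _ (hmin m' ((hS m').2 hm'))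

lemma eq_sum_termEl (f : Fin d → MvPolynomial (Fin n) K) :
    f = ∑ k, ∑ u ∈ (f k).support, termEl (coeffM f (u, k), (u, k)) := by
  have : ∀ k, ∑ u ∈ (f k).support, termEl (coeffM f (u, k), (u, k)) = Pi.single k (f k) := by
    intro k
    simp only [termEl, coeffM]
    conv_rhs => rw [(f k).as_sum]
    exact (map_sum (LinearMap.single K (fun _ : Fin d => MvPolynomial (Fin n) K) k) _ _).symm
  simp only [this]
  exact (Finset.univ_sum_single f).symm

lemma mem_inSub_iff (V : ValOn K) (w : Fin n → ℝ) (mo : MonomialOrder (Fin n))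
    (I : Submodule (MvPolynomial (Fin n) K) (Fin d → MvPolynomial (Fin n) K))
    (f : Fin d → MvPolynomial (Fin n) K) :
    f ∈ inSub V.v w mo I ↔ ∀ m, coeffM f m ≠ 0 → m ∈ initSet V w mo I := by
  classical
  constructor
  · intro hf
    induction hf using Submodule.span_induction with
    | mem g hg =>
      obtain ⟨f, hf, -, t, ⟨ht0, ht1, ht2⟩, rfl⟩ := hg
      intro m hm
      have : m = t.2 := by
        by_contra hne
        apply hm
        simp only [coeffM, termEl]
        by_cases hk : m.2 = t.2.2
        · rw [hk, Pi.single_eq_same, coeff_monomial, if_neg]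
          intro h; exact hne (Prod.ext h.symm hk)
        · rw [Pi.single_eq_of_ne hk]; simp
      subst this
      refine ⟨f, hf, by rwa [ht1], ?_⟩
      rw [ht1]
      exact ht2
    | zero => intro m hm; simp [coeffM] at hm
    | add f g _ _ hf hg =>
      intro m hm
      have e : coeffM (f + g) m = coeffM f m + coeffM g m := by simp [coeffM]
      by_cases h : coeffM f m = 0
      · exact hg m (fun h2 => hm (by rw [e, h, h2, add_zero]))
      · exact hf m h
    | smul p f _ hf =>
      intro m hm
      simp only [coeffM, Pi.smul_apply, smul_eq_mul, coeff_mul] at hm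
      obtain ⟨x, hx, hx0⟩ := Finset.exists_ne_zero_of_sum_ne_zero hm
      have h1 := hf (x.2, m.2) (right_ne_zero_of_mul hx0)
      have h2 := initSet_up V w mo I h1 x.1
      rw [Finset.HasAntidiagonal.mem_antidiagonal, add_comm] at hx
      simpa [hx] using h2
  · intro h
    rw [eq_sum_termEl f]
    refine Submodule.sum_mem _ fun k _ => Submodule.sum_mem _ fun u hu => ?_
    obtain ⟨g, hg, hg0, hg1⟩ := h (u, k) (by simpa [coeffM] using hu)
    have e : termEl (coeffM f (u, k), (u, k)) =
        (C (coeffM f (u, k) / coeffM g (u, k)) : MvPolynomial (Fin n) K) •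
          termEl (coeffM g (u, k), ((u, k) : MMon n d)) := by
      simp only [termEl]
      rw [← Pi.single_smul]
      congr 1
      rw [smul_eq_mul, C_mul_monomial, div_mul_cancel₀ _ hg0]
    rw [e]
    refine Submodule.smul_mem _ _ (Submodule.subset_span ⟨g, hg, ?_, _, ⟨hg0, rfl, hg1⟩, rfl⟩)
    rintro rfl
    simp [coeffM] at hg0

/-- Degree-`δ` component of a vector of polynomials. -/
noncomputable def hcomp (δ : ℕ) (f : Fin d → MvPolynomial (Fin n) K) :
    Fin d → MvPolynomial (Fin n) K := fun k => homogeneousComponent δ (f k)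

lemma coeffM_hcomp (δ : ℕ) (f : Fin d → MvPolynomial (Fin n) K) (m : MMon n d) :
    coeffM (hcomp δ f) m = if (∑ i, m.1 i) = δ then coeffM f m else 0 := by
  simp [coeffM, hcomp, coeff_homogeneousComponent, Finsupp.degree_eq_sum]

lemma hcomp_mem
    (I : Submodule (MvPolynomial (Fin n) K) (Fin d → MvPolynomial (Fin n) K))
    (hgen : ∃ (s : ℕ) (g : Fin s → Fin d → MvPolynomial (Fin n) K),
      (∀ i, IsHomog (g i)) ∧ Submodule.span (MvPolynomial (Fin n) K) (Set.range g) = I)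
    (δ : ℕ) {f : Fin d → MvPolynomial (Fin n) K} (hf : f ∈ I) : hcomp δ f ∈ I := by
  obtain ⟨s, g, hg, hspan⟩ := hgen
  have hgI : ∀ i, g i ∈ I := fun i => hspan ▸ Submodule.subset_span ⟨i, rfl⟩
  rw [← hspan, Submodule.mem_span_range_iff_exists_fun] at hf
  obtain ⟨c, rfl⟩ := hf
  have e : hcomp δ (∑ i, c i • g i) = ∑ i, ∑ j ∈ Finset.range ((c i).totalDegree + 1),
      hcomp δ (homogeneousComponent j (c i) • g i) := by
    funext k
    simp only [hcomp, Finset.sum_apply, map_sum, Pi.smul_apply, smul_eq_mul]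
    refine Finset.sum_congr rfl fun i _ => ?_
    rw [← map_sum, ← Finset.sum_mul, sum_homogeneousComponent]
  rw [e]
  refine Submodule.sum_mem _ fun i _ => Submodule.sum_mem _ fun j _ => ?_
  obtain ⟨ε, hε⟩ := hg i
  have hhom : ∀ k, homogeneousComponent j (c i) * g i k ∈
      homogeneousSubmodule (Fin n) K (j + ε) := by
    intro k
    refine (homogeneousComponent_isHomogeneous j (c i)).mul ?_
    intro u hu
    rw [← hε (u, k) hu, ← Finsupp.degree_eq_sum, Finsupp.degree_eq_weight_one]
    rfl
  by_cases h : δ = j + ε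
  · have : hcomp δ (homogeneousComponent j (c i) • g i) = homogeneousComponent j (c i) • g i := by
      funext k
      simp only [hcomp, Pi.smul_apply, smul_eq_mul]
      rw [homogeneousComponent_of_mem (hhom k), if_pos h]
    rw [this]
    exact I.smul_mem _ (hgI i)
  · have : hcomp δ (homogeneousComponent j (c i) • g i) = 0 := by
      funext k
      simp only [hcomp, Pi.smul_apply, smul_eq_mul]
      rw [homogeneousComponent_of_mem (hhom k), if_neg h]
      rfl
    rw [this]
    exact I.zero_mem

/-- The coefficient functional, as a linear map. -/
noncomputable def coeffML (m : MMon n d) : (Fin d → MvPolynomial (Fin n) K) →ₗ[K] K where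
  toFun f := coeffM f m
  map_add' f g := by simp [coeffM]
  map_smul' c f := by simp [coeffM]

lemma eq_zero_of_coeffM {f : Fin d → MvPolynomial (Fin n) K} (h : ∀ m, coeffM f m = 0) :
    f = 0 := by
  funext k
  ext u
  simpa [coeffM] using h (u, k)

lemma finite_degree (δ : ℕ) : Finite {m : MMon n d // (∑ i, m.1 i) = δ} := by
  have hle : ∀ (m : {m : MMon n d // (∑ i, m.1 i) = δ}) (i : Fin n), m.1.1 i < δ + 1 := by
    intro m i
    have := Finset.single_le_sum (f := fun i => m.1.1 i) (fun _ _ => Nat.zero_le _)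
      (Finset.mem_univ i)
    have h2 := m.2
    omega
  refine Finite.of_injective
    (fun m => ((fun i => ⟨m.1.1 i, hle m i⟩, m.1.2) : (Fin n → Fin (δ + 1)) × Fin d)) ?_
  intro a b hab
  have h1 := congrArg Prod.fst hab
  have h2 := congrArg Prod.snd hab
  apply Subtype.ext
  refine Prod.ext ?_ h2
  ext i
  exact congrArg Fin.val (congrFun h1 i)

lemma linInd_of_init (V : ValOn K) (w : Fin n → ℝ) (mo : MonomialOrder (Fin n))
    {S : Type*} [Fintype S] (μ : S → MMon n d) (hμ : Function.Injective μ)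
    (F : S → Fin d → MvPolynomial (Fin n) K) (hF0 : ∀ s, coeffM (F s) (μ s) ≠ 0)
    (hF1 : ∀ s m', coeffM (F s) m' ≠ 0 →
      termLE V.v w mo (coeffM (F s) (μ s), μ s) (coeffM (F s) m', m')) :
    LinearIndependent K F := by
  classical
  refine Fintype.linearIndependent_iff.2 ?_
  intro g hg
  by_contra hcon
  push Not at hcon
  obtain ⟨i0, hi0⟩ := hcon
  obtain ⟨m0, hm0, hmin⟩ := Finset.exists_min_image (Finset.univ.filter fun i => g i ≠ 0)
    (fun i : S => tkey V.v w mo (g i * coeffM (F i) (μ i), (μ i)))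
    ⟨i0, by simpa using hi0⟩
  have hgm0 : g m0 ≠ 0 := by simpa using hm0
  have hx0 : g m0 * coeffM (F m0) (μ m0) ≠ 0 := mul_ne_zero hgm0 (hF0 m0)
  have hsum : ∑ i, g i * coeffM (F i) (μ m0) = 0 := by
    have := congrArg (coeffML (μ m0)) hg
    rw [map_sum, map_zero] at this
    simp only [map_smul, smul_eq_mul] at this
    exact this
  rw [← Finset.add_sum_erase _ _ (Finset.mem_univ m0)] at hsum
  have hneg := eq_neg_of_add_eq_zero_right hsum
  obtain ⟨r, hr⟩ := V.exists_real hx0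
  have hlt := V.lt_sum (Finset.univ.erase m0)
    (fun i => g i * coeffM (F i) (μ m0)) r (by
      intro i hi
      by_cases hz : g i * coeffM (F i) (μ m0) = 0
      · simp only [hz]
        rw [(V.v_eq_top_iff 0).2 rfl]
        exact WithTop.coe_lt_top r
      · rw [← hr]
        have hgi := left_ne_zero_of_mul hz
        refine strict_of_termLE V w mo (m := (μ i)) (m0 := (μ m0)) ?_ hx0 (hF0 i)
          (right_ne_zero_of_mul hz) hgi
          (termLE_of_tkey _ _ _ _ _ (hmin i (by simpa using hgi)))
          (hF1 i _ (right_ne_zero_of_mul hz))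
        intro h
        exact Finset.ne_of_mem_erase hi (hμ h))
  rw [hneg, V.v_neg, hr] at hlt
  exact lt_irrefl _ hlt

end HelpersTwo

/-- **Invariance of the Hilbert function under passing to the initial submodule.**
If `I ⊆ K[x₁,…,xₙ]^d` is generated by finitely many homogeneous elements, then for every
degree `δ`, the `K`-dimension of the degree-`δ` graded component of `K[x₁,…,xₙ]^d / I`
equals that of `K[x₁,…,xₙ]^d / in_{w,≺}(I)`. -/
theorem hilbert_function_eq_initial {K : Type*} [Field K] {n d : ℕ}
    (V : ValOn K) (w : Fin n → ℝ) (mo : MonomialOrder (Fin n))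
    (I : Submodule (MvPolynomial (Fin n) K) (Fin d → MvPolynomial (Fin n) K))
    (hgen : ∃ (s : ℕ) (g : Fin s → Fin d → MvPolynomial (Fin n) K),
      (∀ i, IsHomog (g i)) ∧ Submodule.span (MvPolynomial (Fin n) K) (Set.range g) = I) :
    ∀ δ : ℕ, hilbertFn I δ = hilbertFn (inSub V.v w mo I) δ := by
  intro δ
  classical
  have hfin := finite_degree (n := n) (d := d) δ
  have hHfin : Module.Finite K (homogComponent K n d δ) := by
    let Φ : homogComponent K n d δ →ₗ[K] ({m : MMon n d // (∑ i, m.1 i) = δ} → K) :=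
      LinearMap.pi fun m => (coeffML m.1).comp (homogComponent K n d δ).subtype
    refine Module.Finite.of_injective Φ ?_
    refine (injective_iff_map_eq_zero _).2 ?_
    intro f hf
    apply Subtype.ext
    apply eq_zero_of_coeffM
    intro m
    by_contra hm
    exact hm (congrFun hf ⟨m, f.2 m hm⟩)
  let S := {m : {m : MMon n d // (∑ i, m.1 i) = δ} // m.1 ∈ initSet V w mo I}
  have : Fintype S := Fintype.ofFinite S
  let P : homogComponent K n d δ →ₗ[K] (S → K) :=
    LinearMap.pi fun m => (coeffML m.1.1).comp (homogComponent K n d δ).subtype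
  have hP : ∀ f s, P f s = coeffM (f : Fin d → MvPolynomial (Fin n) K) s.1.1 := fun _ _ => rfl
  let L := Submodule.comap (homogComponent K n d δ).subtype (I.restrictScalars K)
  let N := Submodule.comap (homogComponent K n d δ).subtype
    ((inSub V.v w mo I).restrictScalars K)
  have hLle : Module.finrank K L ≤ Fintype.card S := by
    rw [← Module.finrank_fintype_fun_eq_card (R := K)]
    apply LinearMap.finrank_le_finrank_of_injective (f := P.comp L.subtype)
    refine (injective_iff_map_eq_zero _).2 ?_
    rintro ⟨f, hf⟩ hPf
    by_contra hne
    have h0 : (f : Fin d → MvPolynomial (Fin n) K) ≠ 0 := by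
      intro h
      exact hne (Subtype.ext (Subtype.ext h))
    obtain ⟨m, hm, hm0⟩ := exists_init V w mo I (f := f) hf h0
    exact hm0 (congrFun hPf ⟨⟨m, f.2 m hm0⟩, hm⟩)
  have hLge : Fintype.card S ≤ Module.finrank K L := by
    have hex : ∀ s : S, ∃ f : L, coeffM (f.1.1) s.1.1 ≠ 0 ∧ ∀ m', coeffM f.1.1 m' ≠ 0 →
        termLE V.v w mo (coeffM f.1.1 s.1.1, s.1.1) (coeffM f.1.1 m', m') := by
      rintro ⟨⟨m, hmδ⟩, f, hf, h0, h1⟩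
      have e : coeffM (hcomp δ f) m = coeffM f m := by rw [coeffM_hcomp, if_pos hmδ]
      have hH : hcomp δ f ∈ homogComponent K n d δ := by
        intro m' hm'
        rw [coeffM_hcomp] at hm'
        by_contra h
        exact hm' (if_neg h)
      refine ⟨⟨⟨hcomp δ f, hH⟩, hcomp_mem I hgen δ hf⟩, ?_, ?_⟩
      · simpa only [e] using h0
      · intro m' hm'
        have e' : coeffM (hcomp δ f) m' = coeffM f m' := by
          rw [coeffM_hcomp, if_pos (hH m' hm')]
        simp only [e, e'] at hm' ⊢
        exact h1 m' hm'
    choose F hF0 hF1 using hex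
    have hli0 := linInd_of_init V w mo (fun s : S => s.1.1)
      (fun s t h => Subtype.ext (Subtype.ext h)) (fun s => (F s).1.1) hF0 hF1
    have hli : LinearIndependent K F :=
      LinearIndependent.of_comp ((homogComponent K n d δ).subtype.comp L.subtype) hli0
    exact hli.fintype_card_le_finrank
  have hN : Module.finrank K N = Fintype.card S := by
    rw [← Module.finrank_fintype_fun_eq_card (R := K)]
    refine LinearEquiv.finrank_eq (LinearEquiv.ofBijective (P.comp N.subtype) ⟨?_, ?_⟩)
    · refine (injective_iff_map_eq_zero _).2 ?_
      rintro ⟨f, hf⟩ hPf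
      apply Subtype.ext
      apply Subtype.ext
      apply eq_zero_of_coeffM
      intro m
      by_contra hm
      exact hm (congrFun hPf ⟨⟨m, f.2 m hm⟩, (mem_inSub_iff V w mo I _).1 hf m hm⟩)
    · intro a
      let f : Fin d → MvPolynomial (Fin n) K := ∑ s : S, termEl (a s, s.1.1)
      have hf : ∀ m, coeffM f m = ∑ s : S, if s.1.1 = m then a s else 0 := by
        intro m
        have : coeffM f m = ∑ s : S, coeffM (termEl (a s, s.1.1)) m :=
          map_sum (coeffML (K := K) m) _ _
        rw [this]
        refine Finset.sum_congr rfl fun s _ => ?_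
        simp only [coeffM, termEl]
        by_cases hk : m.2 = s.1.1.2
        · rw [hk, Pi.single_eq_same, coeff_monomial]
          refine if_congr ⟨fun h => Prod.ext h hk.symm, fun h => by rw [h]⟩ rfl rfl
        · rw [Pi.single_eq_of_ne hk, if_neg (fun h => hk (by rw [h]))]
          simp
      have hsupp : ∀ m, coeffM f m ≠ 0 → ∃ s : S, s.1.1 = m := by
        intro m hm
        rw [hf] at hm
        obtain ⟨s, -, hs⟩ := Finset.exists_ne_zero_of_sum_ne_zero hm
        by_contra hcon
        exact hs (if_neg fun h => hcon ⟨s, h⟩)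
      have hfH : f ∈ homogComponent K n d δ := by
        intro m hm
        obtain ⟨s, rfl⟩ := hsupp m hm
        exact s.1.2
      have hfN : f ∈ inSub V.v w mo I := by
        rw [mem_inSub_iff]
        intro m hm
        obtain ⟨s, rfl⟩ := hsupp m hm
        exact s.2
      refine ⟨⟨⟨f, hfH⟩, hfN⟩, ?_⟩
      funext s
      change coeffM f s.1.1 = a s
      rw [hf, Finset.sum_eq_single s]
      · simp
      · intro t _ hts
        exact if_neg fun h => hts (Subtype.ext (Subtype.ext h))
      · simp
  have h1 := Submodule.finrank_quotient_add_finrank L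
  have h2 := Submodule.finrank_quotient_add_finrank N
  change Module.rank K (_ ⧸ L) = Module.rank K (_ ⧸ N)
  rw [← Module.finrank_eq_rank, ← Module.finrank_eq_rank]
  congr 1
  omega
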